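/- Let Y := span_𝕜(ξ^b_{r,s} : r,s ∈ [1,n], b ∈ B_𝔠 ⊔ B_1) ⊆ M_n(A), and for e ≥ 0 let Star^e Y := Y * Y * ⋯ * Y (e factors) ⊆ M_n(A)^{⊗e}. Then T^A_𝔞(n,d) = ⊕_{e=0}^d S^𝔞(n,d−e) * Star^e Y, where S^𝔞(n,d−e) := (M_n(𝔞)^{⊗(d−e)})^{S_{d−e}} ⊆ S^A(n,d−e). -/

import Mathlib

open Finset

open scoped Classical TensorProduct

noncomputable section

namespace GS

/-- A *good pair* `(A, 𝔞)`: a `𝕜`-superalgebra `A = ev ⊕ od` which is free as a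
`𝕜`-supermodule, together with a subalgebra `𝔞 = aa ⊆ A₀` such that `𝔞` and `A/𝔞` are free,
a complement `𝔠 = cc` of `𝔞` in `A₀`, and an `(A,𝔞)`-basis `B = B_𝔞 ⊔ B_𝔠 ⊔ B_1`
(encoded by `bas : Basis β 𝕜 A` with the partition `part : β → Fin 3`,
where `0` = `B_𝔞`, `1` = `B_𝔠`, `2` = `B_1`). -/
structure GoodPair (𝕜 A β : Type) [CommRing 𝕜] [NonUnitalRing A] [Module 𝕜 A] : Type where
  ev : Submodule 𝕜 A
  od : Submodule 𝕜 A
  compl : IsCompl ev od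
  mul_ee : ∀ a ∈ ev, ∀ b ∈ ev, a * b ∈ ev
  mul_eo : ∀ a ∈ ev, ∀ b ∈ od, a * b ∈ od
  mul_oe : ∀ a ∈ od, ∀ b ∈ ev, a * b ∈ od
  mul_oo : ∀ a ∈ od, ∀ b ∈ od, a * b ∈ ev
  free_ev : Module.Free 𝕜 ev
  free_od : Module.Free 𝕜 od
  aa : Submodule 𝕜 A
  aa_le_ev : aa ≤ ev
  aa_mul : ∀ a ∈ aa, ∀ b ∈ aa, a * b ∈ aa
  free_aa : Module.Free 𝕜 aa
  free_quot : Module.Free 𝕜 (A ⧸ aa)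
  cc : Submodule 𝕜 A
  aa_inf_cc : aa ⊓ cc = ⊥
  aa_sup_cc : aa ⊔ cc = ev
  bas : Module.Basis β 𝕜 A
  part : β → Fin 3
  bas_mem_aa : ∀ i, part i = 0 → bas i ∈ aa
  bas_mem_cc : ∀ i, part i = 1 → bas i ∈ cc
  bas_mem_od : ∀ i, part i = 2 → bas i ∈ od

variable {𝕜 A β : Type} [CommRing 𝕜] [NonUnitalRing A] [Module 𝕜 A]

/-- An element is homogeneous if it lies in the even or the odd part. -/
def Homog (P : GoodPair 𝕜 A β) (a : A) : Prop := a ∈ P.ev ∨ a ∈ P.od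

/-- `H`, the set of nonzero homogeneous elements of `A`. -/
def Hset (P : GoodPair 𝕜 A β) : Set A := {a | Homog P a ∧ a ≠ 0}

/-- `⟨𝐚,𝐜⟩ = #{(k,l) : k > l, a_k odd, c_l odd}` (the Koszul sign count). -/
def koz (od : Submodule 𝕜 A) {d : ℕ} (a c : Fin d → A) : ℕ :=
  (univ.filter fun kl : Fin d × Fin d => kl.2 < kl.1 ∧ a kl.1 ∈ od ∧ c kl.2 ∈ od).card

/-- `⟨σ;𝐚⟩ = #{(k,l) : k < l, σ⁻¹k > σ⁻¹l, a_k and a_l odd}`. -/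
def sgnc (od : Submodule 𝕜 A) {d : ℕ} (σ : Equiv.Perm (Fin d)) (a : Fin d → A) : ℕ :=
  (univ.filter fun kl : Fin d × Fin d =>
    kl.1 < kl.2 ∧ σ⁻¹ kl.2 < σ⁻¹ kl.1 ∧ a kl.1 ∈ od ∧ a kl.2 ∈ od).card

/-- `⟨𝐚,𝐫,𝐬⟩ = #{(k,l) : k < l, a_k, a_l odd, (a_k,r_k,s_k) > (a_l,r_l,s_l)}` with respect to
the fixed total order `ord` on `A × [1,n] × [1,n]`. -/
def ang {n : ℕ} (od : Submodule 𝕜 A) (ord : LinearOrder (A × Fin n × Fin n))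
    {d : ℕ} (a : Fin d → A) (r s : Fin d → Fin n) : ℕ :=
  (univ.filter fun kl : Fin d × Fin d =>
    kl.1 < kl.2 ∧ a kl.1 ∈ od ∧ a kl.2 ∈ od ∧
      ord.lt (a kl.2, r kl.2, s kl.2) (a kl.1, r kl.1, s kl.1)).card

/-- `(𝐚,𝐫,𝐬) ∈ Tri^H(n,d)`: all entries are nonzero homogeneous, and a repeated entry
triple forces evenness. -/
def IsTriH (P : GoodPair 𝕜 A β) {n d : ℕ} (a : Fin d → A) (r s : Fin d → Fin n) : Prop :=
  (∀ k, a k ∈ Hset P) ∧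
    ∀ k l : Fin d, k ≠ l → (a k, r k, s k) = (a l, r l, s l) → a k ∈ P.ev

/-- `(𝐛,𝐫,𝐬) ∈ Tri^B(n,d)` for words of basis elements. -/
def IsTriB (P : GoodPair 𝕜 A β) {n d : ℕ} (b : Fin d → β) (r s : Fin d → Fin n) : Prop :=
  ∀ k l : Fin d, k ≠ l → ((b k, r k, s k) : β × Fin n × Fin n) = (b l, r l, s l) →
    P.part (b k) ≠ 2

/-- Minimal length representatives of the cosets `(S_e × S_f)\S_{e+f}`. -/
def IsShuffle (e f : ℕ) (σ : Equiv.Perm (Fin (e + f))) : Prop :=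
  (∀ k l : Fin (e + f), k < l → (l : ℕ) < e → σ⁻¹ k < σ⁻¹ l) ∧
  (∀ k l : Fin (e + f), k < l → e ≤ (k : ℕ) → σ⁻¹ k < σ⁻¹ l)

/-- The tower of superalgebras `M_n(A)^{⊗d}`, `d ≥ 0`, axiomatised.  `X a r s` is the pure
tensor `ξ^{a_1}_{r_1,s_1} ⊗ ⋯ ⊗ ξ^{a_d}_{r_d,s_d}` of matrix units; it is multilinear in the
`A`-entries, the pure tensors of basis elements form a basis, multiplication is the sign-twisted
(Koszul) componentwise one, `act` is the right action of the symmetric groups by superalgebra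
automorphisms, `evT/odT` is the induced supermodule structure, `star` is the `*`-(shuffle)
product and `nab` gives the components of the deconcatenation coproduct `∇`. -/
structure Tower (𝕜 A β : Type) [CommRing 𝕜] [NonUnitalRing A] [Module 𝕜 A]
    (n : ℕ) (T : ℕ → Type) [∀ e, NonUnitalRing (T e)] [∀ e, Module 𝕜 (T e)]
    (P : GoodPair 𝕜 A β) : Type where
  X : ∀ {e : ℕ}, (Fin e → A) → (Fin e → Fin n) → (Fin e → Fin n) → T e
  X_update_add : ∀ {e : ℕ} (a : Fin e → A) (r s : Fin e → Fin n) (k : Fin e) (x y : A),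
    X (Function.update a k (x + y)) r s
      = X (Function.update a k x) r s + X (Function.update a k y) r s
  X_update_smul : ∀ {e : ℕ} (a : Fin e → A) (r s : Fin e → Fin n) (k : Fin e) (c : 𝕜) (x : A),
    X (Function.update a k (c • x)) r s = c • X (Function.update a k x) r s
  bas : ∀ e : ℕ, Module.Basis ((Fin e → β) × (Fin e → Fin n) × (Fin e → Fin n)) 𝕜 (T e)
  bas_eq : ∀ (e : ℕ) (b : Fin e → β) (r s : Fin e → Fin n),
    bas e (b, r, s) = X (fun k => P.bas (b k)) r s
  X_mul : ∀ {e : ℕ} (a c : Fin e → A) (r s t u : Fin e → Fin n),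
    (∀ k, Homog P (a k)) → (∀ k, Homog P (c k)) →
    X a r s * X c t u
      = if s = t then ((-1 : ℤ) ^ koz P.od a c) • X (fun k => a k * c k) r u else 0
  act : ∀ {e : ℕ}, Equiv.Perm (Fin e) → T e →ₗ[𝕜] T e
  act_act : ∀ {e : ℕ} (σ τ : Equiv.Perm (Fin e)) (x : T e), act τ (act σ x) = act (σ * τ) x
  act_mul : ∀ {e : ℕ} (σ : Equiv.Perm (Fin e)) (x y : T e), act σ (x * y) = act σ x * act σ y
  act_X : ∀ {e : ℕ} (σ : Equiv.Perm (Fin e)) (a : Fin e → A) (r s : Fin e → Fin n),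
    (∀ k, Homog P (a k)) →
    act σ (X a r s) = ((-1 : ℤ) ^ sgnc P.od σ a) • X (a ∘ σ) (r ∘ σ) (s ∘ σ)
  evT : ∀ e : ℕ, Submodule 𝕜 (T e)
  odT : ∀ e : ℕ, Submodule 𝕜 (T e)
  complT : ∀ e : ℕ, IsCompl (evT e) (odT e)
  X_mem_evT : ∀ {e : ℕ} (a : Fin e → A) (r s : Fin e → Fin n), (∀ k, Homog P (a k)) →
    Even (univ.filter fun k => a k ∈ P.od).card → X a r s ∈ evT e
  X_mem_odT : ∀ {e : ℕ} (a : Fin e → A) (r s : Fin e → Fin n), (∀ k, Homog P (a k)) →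
    ¬ Even (univ.filter fun k => a k ∈ P.od).card → X a r s ∈ odT e
  star : ∀ {e f : ℕ}, T e →ₗ[𝕜] T f →ₗ[𝕜] T (e + f)
  star_X : ∀ {e f : ℕ} (a : Fin e → A) (r s : Fin e → Fin n)
      (c : Fin f → A) (t u : Fin f → Fin n),
    star (X a r s) (X c t u)
      = ∑ σ ∈ univ.filter (IsShuffle e f),
          act σ (X (Fin.append a c) (Fin.append r t) (Fin.append s u))
  nab : ∀ e f : ℕ, T (e + f) →ₗ[𝕜] TensorProduct 𝕜 (T e) (T f)
  nab_X : ∀ (e f : ℕ) (a : Fin (e + f) → A) (r s : Fin (e + f) → Fin n),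
    nab e f (X a r s)
      = (X (a ∘ Fin.castAdd f) (r ∘ Fin.castAdd f) (s ∘ Fin.castAdd f))
          ⊗ₜ[𝕜] (X (a ∘ Fin.natAdd e) (r ∘ Fin.natAdd e) (s ∘ Fin.natAdd e))

variable {n : ℕ} {T : ℕ → Type} [∀ e, NonUnitalRing (T e)] [∀ e, Module 𝕜 (T e)]

/-- `ξ^𝐚_{𝐫,𝐬}`, the signed sum of the pure tensors over the `S_d`-orbit of `(𝐚,𝐫,𝐬)`. -/
def xiH {P : GoodPair 𝕜 A β} (D : Tower 𝕜 A β n T P) (ord : LinearOrder (A × Fin n × Fin n))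
    {d : ℕ} (a : Fin d → A) (r s : Fin d → Fin n) : T d :=
  ∑ w ∈ (univ.image fun σ : Equiv.Perm (Fin d) => (a ∘ σ, r ∘ σ, s ∘ σ)),
    ((-1 : ℤ) ^ (ang P.od ord a r s + ang P.od ord w.1 w.2.1 w.2.2)) • D.X w.1 w.2.1 w.2.2

/-- `ξ^𝐛_{𝐫,𝐬}` for a word `𝐛` of basis elements. -/
def xiB {P : GoodPair 𝕜 A β} (D : Tower 𝕜 A β n T P) (ord : LinearOrder (A × Fin n × Fin n))
    {d : ℕ} (b : Fin d → β) (r s : Fin d → Fin n) : T d :=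
  xiH D ord (fun k => P.bas (b k)) r s

/-- `[𝐛,𝐫,𝐬]^b_{r,s}`, the multiplicity of an entry triple in a word triple. -/
def mco {n d : ℕ} (b : Fin d → β) (r s : Fin d → Fin n) (w : β × Fin n × Fin n) : ℕ :=
  (univ.filter fun k => ((b k, r k, s k) : β × Fin n × Fin n) = w).card

/-- `∏ ([𝐛,𝐫,𝐬]^b_{r,s})!` over the entry triples whose basis element satisfies `sel`
(e.g. `sel i = (part i = 1)` gives `[𝐛,𝐫,𝐬]^!_𝔠`). -/
def facSel (sel : β → Prop) {n d : ℕ} (b : Fin d → β) (r s : Fin d → Fin n) : ℕ :=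
  ∏ w ∈ ((univ.image fun k => ((b k, r k, s k) : β × Fin n × Fin n)).filter fun w => sel w.1),
    Nat.factorial (mco b r s w)

/-- `η^𝐛_{𝐫,𝐬} := [𝐛,𝐫,𝐬]^!_𝔠 • ξ^𝐛_{𝐫,𝐬}`. -/
def eta {P : GoodPair 𝕜 A β} (D : Tower 𝕜 A β n T P) (ord : LinearOrder (A × Fin n × Fin n))
    {d : ℕ} (b : Fin d → β) (r s : Fin d → Fin n) : T d :=
  facSel (fun i => P.part i = 1) b r s • xiB D ord b r s

/-- `S^A(n,d) = (M_n(A)^{⊗d})^{S_d}`, the invariants. -/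
def SchurS {P : GoodPair 𝕜 A β} (D : Tower 𝕜 A β n T P) (d : ℕ) : Submodule 𝕜 (T d) where
  carrier := {x | ∀ σ : Equiv.Perm (Fin d), D.act σ x = x}
  add_mem' := by
    intro x y hx hy σ
    rw [map_add, hx σ, hy σ]
  zero_mem' := by
    intro σ; exact map_zero _
  smul_mem' := by
    intro c x hx σ
    rw [map_smul, hx σ]

/-- The generalized Schur algebra `T^A_𝔞(n,d)`, the `𝕜`-span of the `η^𝐛_{𝐫,𝐬}`,
`(𝐛,𝐫,𝐬) ∈ Tri^B(n,d)`. -/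
def SchurT {P : GoodPair 𝕜 A β} (D : Tower 𝕜 A β n T P) (ord : LinearOrder (A × Fin n × Fin n))
    (d : ℕ) : Submodule 𝕜 (T d) :=
  Submodule.span 𝕜 {x | ∃ b r s, IsTriB P b r s ∧ x = eta D ord b r s}

/-- `S^𝔞(n,d) = (M_n(𝔞)^{⊗d})^{S_d} ⊆ S^A(n,d)`. -/
def SchurA {P : GoodPair 𝕜 A β} (D : Tower 𝕜 A β n T P) (d : ℕ) : Submodule 𝕜 (T d) :=
  Submodule.span 𝕜 {x | ∃ a r s, (∀ k, a k ∈ P.aa) ∧ x = D.X a r s} ⊓ SchurS D d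

/-- `ξ^f = E^f ⊗ ⋯ ⊗ E^f` for `f ∈ A`. -/
def xiIdem {P : GoodPair 𝕜 A β} (D : Tower 𝕜 A β n T P) (f : A) (d : ℕ) : T d :=
  ∑ r : Fin d → Fin n, D.X (fun _ => f) r r

/-- Transport along an equality of degrees. -/
def tcast {e f : ℕ} (h : e = f) : T e ≃ₗ[𝕜] T f := by
  subst h; exact LinearEquiv.refl 𝕜 (T e)

/-- Iterated `*`-product `x_1 * x_2 * ⋯ * x_d` of degree-one pure tensors read off from a
word (associated to the left). -/
def starIter {P : GoodPair 𝕜 A β} (D : Tower 𝕜 A β n T P) :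
    ∀ (e : ℕ), (Fin e → A) → (Fin e → Fin n) → (Fin e → Fin n) → T e
  | 0, _, _, _ => D.X Fin.elim0 Fin.elim0 Fin.elim0
  | (e + 1), a, r, s =>
      D.star (starIter D e (a ∘ Fin.castSucc) (r ∘ Fin.castSucc) (s ∘ Fin.castSucc))
        (D.X (fun _ : Fin 1 => a (Fin.last e)) (fun _ => r (Fin.last e)) (fun _ => s (Fin.last e)))

/-- Iterated `*`-product of blockwise given elements. -/
def starBlocks {P : GoodPair 𝕜 A β} (D : Tower 𝕜 A β n T P) :
    ∀ (q : ℕ) (sz : Fin q → ℕ), (∀ m, T (sz m)) → T (∑ m, sz m)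
  | 0, sz, _ => cast (congrArg T (Fin.sum_univ_zero sz).symm) (D.X Fin.elim0 Fin.elim0 Fin.elim0)
  | (q + 1), sz, x =>
      cast (congrArg T (Fin.sum_univ_castSucc sz).symm)
        (D.star (starBlocks D q (fun m => sz m.castSucc) (fun m => x m.castSucc))
          (x (Fin.last q)))

/-- Concatenation of a tuple of words of lengths `sz 0, …, sz (q-1)`. -/
def concatB {α : Type} : ∀ {q : ℕ} (sz : Fin q → ℕ), (∀ m, Fin (sz m) → α) → Fin (∑ m, sz m) → α
  | 0, sz, _ => fun k => Fin.elim0 (cast (congrArg Fin (Fin.sum_univ_zero sz)) k)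
  | (q + 1), sz, f => fun k =>
      Fin.append (concatB (fun m => sz m.castSucc) (fun m => f m.castSucc)) (f (Fin.last q))
        (cast (congrArg Fin (Fin.sum_univ_castSucc sz)) k)

/-- A triple of words `(𝐛,𝐫,𝐬)`. -/
abbrev WordTriple (β : Type) (n d : ℕ) : Type :=
  (Fin d → β) × (Fin d → Fin n) × (Fin d → Fin n)

/-- The diagonal right place-permutation action on triples of words. -/
def wAct {d : ℕ} (w : WordTriple β n d) (σ : Equiv.Perm (Fin d)) : WordTriple β n d :=
  (w.1 ∘ σ, w.2.1 ∘ σ, w.2.2 ∘ σ)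

/-- The `k`-th entry triple `(b_k, r_k, s_k)` (with `b_k` realized in `A`). -/
def entryAt (P : GoodPair 𝕜 A β) {n d : ℕ} (w : WordTriple β n d) (k : Fin d) :
    A × Fin n × Fin n :=
  (P.bas (w.1 k), w.2.1 k, w.2.2 k)

/-- The lexicographic order on triples of words induced by the total order `ord`. -/
def wordLE (P : GoodPair 𝕜 A β) {n : ℕ} (ord : LinearOrder (A × Fin n × Fin n)) {d : ℕ}
    (w w' : WordTriple β n d) : Prop :=
  (∀ k, entryAt P w k = entryAt P w' k) ∨
    ∃ l : Fin d, (∀ k, k < l → entryAt P w k = entryAt P w' k) ∧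
      ord.lt (entryAt P w l) (entryAt P w' l)

/-- `Tri^B_0(n,d)`: the lexicographically minimal representatives of the `S_d`-orbits on
`Tri^B(n,d)`. -/
def IsTri0 (P : GoodPair 𝕜 A β) {n : ℕ} (ord : LinearOrder (A × Fin n × Fin n)) {d : ℕ}
    (w : WordTriple β n d) : Prop :=
  IsTriB P w.1 w.2.1 w.2.2 ∧ ∀ σ : Equiv.Perm (Fin d), wordLE P ord w (wAct w σ)

/-- The first `l` letters of each word. -/
def firstW {d : ℕ} (l : ℕ) (hl : l ≤ d) (w : WordTriple β n d) : WordTriple β n l :=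
  (fun k => w.1 ⟨k, lt_of_lt_of_le k.isLt hl⟩,
   fun k => w.2.1 ⟨k, lt_of_lt_of_le k.isLt hl⟩,
   fun k => w.2.2 ⟨k, lt_of_lt_of_le k.isLt hl⟩)

/-- The last `d - l` letters of each word. -/
def lastW {d : ℕ} (l : ℕ) (hl : l ≤ d) (w : WordTriple β n d) : WordTriple β n (d - l) :=
  (fun k => w.1 ⟨l + (k : ℕ), by have := k.isLt; omega⟩,
   fun k => w.2.1 ⟨l + (k : ℕ), by have := k.isLt; omega⟩,
   fun k => w.2.2 ⟨l + (k : ℕ), by have := k.isLt; omega⟩)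

/-- Concatenation of words. -/
def appF {α : Type} {d : ℕ} (l : ℕ) (hl : l ≤ d) (f : Fin l → α) (g : Fin (d - l) → α) :
    Fin d → α :=
  fun k => if hk : (k : ℕ) < l then f ⟨k, hk⟩ else g ⟨(k : ℕ) - l, by have := k.isLt; omega⟩

/-- Concatenation `T¹T²` of two triples of words. -/
def concatW {d : ℕ} (l : ℕ) (hl : l ≤ d) (p : WordTriple β n l × WordTriple β n (d - l)) :
    WordTriple β n d :=
  (appF l hl p.1.1 p.2.1, appF l hl p.1.2.1 p.2.2.1, appF l hl p.1.2.2 p.2.2.2)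

/-- `Spl_l(T)`, the set of `l`-splits of `T ∈ Tri^B_0(n,d)`. -/
def splitsF (P : GoodPair 𝕜 A β) {n : ℕ} (ord : LinearOrder (A × Fin n × Fin n)) {d : ℕ}
    (l : ℕ) (hl : l ≤ d) (w : WordTriple β n d) :
    Finset (WordTriple β n l × WordTriple β n (d - l)) :=
  (univ.image fun σ : Equiv.Perm (Fin d) =>
      (firstW l hl (wAct w σ), lastW l hl (wAct w σ))).filter
    fun p => IsTri0 P ord p.1 ∧ IsTri0 P ord p.2

/-- The number of inversions (= Coxeter length) of a permutation. -/
def invCount {d : ℕ} (σ : Equiv.Perm (Fin d)) : ℕ :=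
  (univ.filter fun kl : Fin d × Fin d => kl.1 < kl.2 ∧ σ kl.2 < σ kl.1).card

/-- The submodule `{x | x·ε = x}` (for an idempotent `ε` this is `R·ε`). -/
def rfix (𝕜 : Type) {R : Type} [CommRing 𝕜] [NonUnitalRing R] [Module 𝕜 R]
    [IsScalarTower 𝕜 R R] (ε : R) : Submodule 𝕜 R where
  carrier := {x | x * ε = x}
  add_mem' := by
    intro x y hx hy
    simp only [Set.mem_setOf_eq] at *
    rw [add_mul, hx, hy]
  zero_mem' := by simp
  smul_mem' := by
    intro c x hx
    simp only [Set.mem_setOf_eq] at *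
    rw [smul_mul_assoc, hx]

/-- Right `εSε`-module endomorphism property for a map of `S·ε = M ⊓ rfix ε`,
where `S` is the (possibly non-unital) algebra realized as the submodule `M` of `R`. -/
def IsEquivar (𝕜 : Type) {R : Type} [CommRing 𝕜] [NonUnitalRing R] [Module 𝕜 R]
    [IsScalarTower 𝕜 R R] (M : Submodule 𝕜 R) (ε : R)
    (f : ↥(M ⊓ rfix 𝕜 ε) →ₗ[𝕜] ↥(M ⊓ rfix 𝕜 ε)) : Prop :=
  ∀ (x : ↥(M ⊓ rfix 𝕜 ε)) (c : R), c ∈ M → ε * c * ε = c →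
    ∀ h : (x : R) * c ∈ M ⊓ rfix 𝕜 ε,
      ((f ⟨(x : R) * c, h⟩ : ↥(M ⊓ rfix 𝕜 ε)) : R) = (f x : R) * c

/-- `ε` is a *double centralizer idempotent* for the algebra `M ⊆ R`: the left
multiplication map `λ : M → End_{εMε}(Mε)` is bijective. -/
def IsDCI (𝕜 : Type) {R : Type} [CommRing 𝕜] [NonUnitalRing R] [Module 𝕜 R]
    [IsScalarTower 𝕜 R R] (M : Submodule 𝕜 R) (ε : R) : Prop :=
  (∀ s ∈ M, ∀ s' ∈ M, (∀ x ∈ M ⊓ rfix 𝕜 ε, s * x = s' * x) → s = s') ∧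
  (∀ f : ↥(M ⊓ rfix 𝕜 ε) →ₗ[𝕜] ↥(M ⊓ rfix 𝕜 ε), IsEquivar 𝕜 M ε f →
    ∃ s ∈ M, ∀ x : ↥(M ⊓ rfix 𝕜 ε), (f x : R) = s * (x : R))

/-- The `*`-product of two `𝕜`-submodules. -/
def starSub {𝕜 A β : Type} [CommRing 𝕜] [NonUnitalRing A] [Module 𝕜 A]
    {n : ℕ} {T : ℕ → Type} [∀ e, NonUnitalRing (T e)] [∀ e, Module 𝕜 (T e)]
    {P : GoodPair 𝕜 A β} (D : Tower 𝕜 A β n T P) {e f : ℕ}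
    (U : Submodule 𝕜 (T e)) (V : Submodule 𝕜 (T f)) : Submodule 𝕜 (T (e + f)) :=
  Submodule.span 𝕜 {z | ∃ u ∈ U, ∃ v ∈ V, z = D.star u v}

/-- `Y := span(ξ^b_{r,s} : r,s ∈ [1,n], b ∈ B_𝔠 ⊔ B_1) ⊆ M_n(A) = M_n(A)^{⊗1}`. -/
def Ysub {𝕜 A β : Type} [CommRing 𝕜] [NonUnitalRing A] [Module 𝕜 A]
    {n : ℕ} {T : ℕ → Type} [∀ e, NonUnitalRing (T e)] [∀ e, Module 𝕜 (T e)]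
    {P : GoodPair 𝕜 A β} (D : Tower 𝕜 A β n T P) : Submodule 𝕜 (T 1) :=
  Submodule.span 𝕜 {x | ∃ (i : β) (r s : Fin n), P.part i ≠ 0 ∧
    x = D.X (fun _ => P.bas i) (fun _ => r) (fun _ => s)}

/-- `Star^e Y = Y * ⋯ * Y` (`e` factors); `Star^0 Y` is the degree-zero line `𝕜 ⊆ ⊕_d M_n(A)^{⊗d}`. -/
def starPow {𝕜 A β : Type} [CommRing 𝕜] [NonUnitalRing A] [Module 𝕜 A]
    {n : ℕ} {T : ℕ → Type} [∀ e, NonUnitalRing (T e)] [∀ e, Module 𝕜 (T e)]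
    {P : GoodPair 𝕜 A β} (D : Tower 𝕜 A β n T P) : ∀ e : ℕ, Submodule 𝕜 (T e)
  | 0 => Submodule.span 𝕜 {D.X Fin.elim0 Fin.elim0 Fin.elim0}
  | (e + 1) => starSub D (starPow D e) (Ysub D)


/-! ### Helper lemmas -/

lemma cc_le_ev (P : GoodPair 𝕜 A β) : P.cc ≤ P.ev := by
  rw [← P.aa_sup_cc]; exact le_sup_right

lemma bas_ev (P : GoodPair 𝕜 A β) (i : β) (h : P.part i ≠ 2) : P.bas i ∈ P.ev := by
  have h3 : P.part i = 0 ∨ P.part i = 1 ∨ P.part i = 2 := by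
    generalize P.part i = x
    fin_cases x <;> simp
  rcases h3 with h0 | h1 | h2
  · exact P.aa_le_ev (P.bas_mem_aa i h0)
  · exact cc_le_ev P (P.bas_mem_cc i h1)
  · exact absurd h2 h

lemma homog_bas (P : GoodPair 𝕜 A β) (i : β) : Homog P (P.bas i) := by
  by_cases h : P.part i = 2
  · exact Or.inr (P.bas_mem_od i h)
  · exact Or.inl (bas_ev P i h)

lemma bas_od_iff [Nontrivial 𝕜] (P : GoodPair 𝕜 A β) (i : β) :
    P.bas i ∈ P.od ↔ P.part i = 2 := by
  refine ⟨fun h => ?_, P.bas_mem_od i⟩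
  by_contra h2
  have := (Submodule.disjoint_def.1 P.compl.disjoint) _ (bas_ev P i h2) h
  exact P.bas.ne_zero i this

/-- Pure tensor of basis elements attached to a word of letters. -/
def XW {P : GoodPair 𝕜 A β} (D : Tower 𝕜 A β n T P) {d : ℕ}
    (w : Fin d → β × Fin n × Fin n) : T d :=
  D.X (fun k => P.bas (w k).1) (fun k => (w k).2.1) (fun k => (w k).2.2)

def sg (P : GoodPair 𝕜 A β) {d : ℕ} (σ : Equiv.Perm (Fin d))
    (w : Fin d → β × Fin n × Fin n) : ℕ :=
  sgnc P.od σ (fun k => P.bas (w k).1)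

lemma act_XW {P : GoodPair 𝕜 A β} (D : Tower 𝕜 A β n T P) {d : ℕ} (σ : Equiv.Perm (Fin d))
    (w : Fin d → β × Fin n × Fin n) :
    D.act σ (XW D w) = ((-1 : ℤ) ^ sg P σ w) • XW D (w ∘ σ) :=
  D.act_X σ _ _ _ (fun _ => homog_bas P _)

def wordEquiv (β : Type) (n e : ℕ) :
    (Fin e → β) × (Fin e → Fin n) × (Fin e → Fin n) ≃ (Fin e → β × Fin n × Fin n) where
  toFun p := fun k => (p.1 k, p.2.1 k, p.2.2 k)
  invFun w := (fun k => (w k).1, fun k => (w k).2.1, fun k => (w k).2.2)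
  left_inv _ := rfl
  right_inv _ := rfl

def basW {P : GoodPair 𝕜 A β} (D : Tower 𝕜 A β n T P) (e : ℕ) :
    Module.Basis (Fin e → β × Fin n × Fin n) 𝕜 (T e) :=
  (D.bas e).reindex (wordEquiv β n e)

lemma basW_apply {P : GoodPair 𝕜 A β} (D : Tower 𝕜 A β n T P) (e : ℕ)
    (w : Fin e → β × Fin n × Fin n) : basW D e w = XW D w := by
  rw [basW, Module.Basis.reindex_apply]
  exact D.bas_eq e _ _ _

lemma nsmul_cancel [IsDomain 𝕜] [CharZero 𝕜] {P : GoodPair 𝕜 A β} (D : Tower 𝕜 A β n T P)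
    {d : ℕ} {N : ℕ} (hN : N ≠ 0) {x y : T d} (h : N • x = N • y) : x = y := by
  apply (basW D d).repr.injective
  ext w
  have := congrArg (fun z => (basW D d).repr z w) h
  simp only [map_nsmul, Finsupp.smul_apply, nsmul_eq_mul] at this
  exact mul_left_cancel₀ (Nat.cast_ne_zero.2 hN) this

/-- full symmetrization -/
def symm {P : GoodPair 𝕜 A β} (D : Tower 𝕜 A β n T P) {d : ℕ} (x : T d) : T d :=
  ∑ σ : Equiv.Perm (Fin d), D.act σ x

lemma symm_act {P : GoodPair 𝕜 A β} (D : Tower 𝕜 A β n T P) {d : ℕ} (ρ : Equiv.Perm (Fin d))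
    (x : T d) : symm D (D.act ρ x) = symm D x := by
  unfold symm
  simp only [D.act_act]
  exact Fintype.sum_equiv (Equiv.mulLeft ρ) _ _ (fun _ => rfl)

lemma act_symm {P : GoodPair 𝕜 A β} (D : Tower 𝕜 A β n T P) {d : ℕ} (ρ : Equiv.Perm (Fin d))
    (x : T d) : D.act ρ (symm D x) = symm D x := by
  unfold symm
  simp only [map_sum, D.act_act]
  exact Fintype.sum_equiv (Equiv.mulRight ρ) _ _ (fun _ => rfl)

lemma symm_zsmul {P : GoodPair 𝕜 A β} (D : Tower 𝕜 A β n T P) {d : ℕ} (z : ℤ)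
    (x : T d) : symm D (z • x) = z • symm D x := by
  unfold symm
  simp only [map_zsmul, Finset.smul_sum]

lemma symm_comp {P : GoodPair 𝕜 A β} (D : Tower 𝕜 A β n T P) {d : ℕ} (ρ : Equiv.Perm (Fin d))
    (w : Fin d → β × Fin n × Fin n) :
    symm D (XW D w) = ((-1 : ℤ) ^ sg P ρ w) • symm D (XW D (w ∘ ρ)) := by
  rw [← symm_act D ρ, act_XW, symm_zsmul]

/-! #### parity lemmas -/

lemma parity_aux {α : Type} (ord : LinearOrder α) {d : ℕ} (o : Fin d → Prop) (f : Fin d → α)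
    (σ : Equiv.Perm (Fin d)) (hinj : ∀ k l, o k → o l → f k = f l → k = l) :
    Even ((univ.filter fun kl : Fin d × Fin d =>
        kl.1 < kl.2 ∧ σ⁻¹ kl.2 < σ⁻¹ kl.1 ∧ o kl.1 ∧ o kl.2).card
      + ((univ.filter fun kl : Fin d × Fin d =>
        kl.1 < kl.2 ∧ o kl.1 ∧ o kl.2 ∧ ord.lt (f kl.2) (f kl.1)).card
      + (univ.filter fun kl : Fin d × Fin d =>
        kl.1 < kl.2 ∧ o (σ kl.1) ∧ o (σ kl.2) ∧ ord.lt (f (σ kl.2)) (f (σ kl.1))).card)) := by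
  have hC : (univ.filter fun kl : Fin d × Fin d =>
        kl.1 < kl.2 ∧ o (σ kl.1) ∧ o (σ kl.2) ∧ ord.lt (f (σ kl.2)) (f (σ kl.1))).card
      = (univ.filter fun kl : Fin d × Fin d =>
        σ⁻¹ kl.1 < σ⁻¹ kl.2 ∧ o kl.1 ∧ o kl.2 ∧ ord.lt (f kl.2) (f kl.1)).card := by
    refine Finset.card_bij' (fun p _ => (σ p.1, σ p.2)) (fun p _ => (σ⁻¹ p.1, σ⁻¹ p.2))
      ?_ ?_ ?_ ?_ <;> simp
  have hC' : (univ.filter fun kl : Fin d × Fin d =>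
        σ⁻¹ kl.1 < σ⁻¹ kl.2 ∧ o kl.1 ∧ o kl.2 ∧ ord.lt (f kl.2) (f kl.1)).card
      = (univ.filter fun kl : Fin d × Fin d => kl.1 < kl.2 ∧
        σ⁻¹ kl.1 < σ⁻¹ kl.2 ∧ o kl.1 ∧ o kl.2 ∧ ord.lt (f kl.2) (f kl.1)).card
      + (univ.filter fun kl : Fin d × Fin d => kl.2 < kl.1 ∧
        σ⁻¹ kl.1 < σ⁻¹ kl.2 ∧ o kl.1 ∧ o kl.2 ∧ ord.lt (f kl.2) (f kl.1)).card := by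
    simp only [Finset.card_filter]
    rw [← Finset.sum_add_distrib]
    refine Finset.sum_congr rfl fun p _ => ?_
    rcases lt_trichotomy p.1 p.2 with h | h | h
    · simp [h, not_lt.2 h.le]
    · simp [h]
    · simp [h, not_lt.2 h.le]
  have hC2 : (univ.filter fun kl : Fin d × Fin d => kl.2 < kl.1 ∧
        σ⁻¹ kl.1 < σ⁻¹ kl.2 ∧ o kl.1 ∧ o kl.2 ∧ ord.lt (f kl.2) (f kl.1)).card
      = (univ.filter fun kl : Fin d × Fin d => kl.1 < kl.2 ∧
        σ⁻¹ kl.2 < σ⁻¹ kl.1 ∧ o kl.1 ∧ o kl.2 ∧ ord.lt (f kl.1) (f kl.2)).card := by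
    refine Finset.card_bij' (fun p _ => (p.2, p.1)) (fun p _ => (p.2, p.1))
      ?_ ?_ ?_ ?_ <;> simp <;> tauto
  have hB : (univ.filter fun kl : Fin d × Fin d =>
        kl.1 < kl.2 ∧ o kl.1 ∧ o kl.2 ∧ ord.lt (f kl.2) (f kl.1)).card
      = (univ.filter fun kl : Fin d × Fin d => kl.1 < kl.2 ∧
        σ⁻¹ kl.1 < σ⁻¹ kl.2 ∧ o kl.1 ∧ o kl.2 ∧ ord.lt (f kl.2) (f kl.1)).card
      + (univ.filter fun kl : Fin d × Fin d => kl.1 < kl.2 ∧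
        σ⁻¹ kl.2 < σ⁻¹ kl.1 ∧ o kl.1 ∧ o kl.2 ∧ ord.lt (f kl.2) (f kl.1)).card := by
    simp only [Finset.card_filter]
    rw [← Finset.sum_add_distrib]
    refine Finset.sum_congr rfl fun p _ => ?_
    rcases lt_trichotomy (σ⁻¹ p.1) (σ⁻¹ p.2) with h | h | h
    · simp only [h, not_lt.2 h.le, true_and, false_and, and_false, if_false, add_zero, zero_add]
    · have : p.1 = p.2 := σ⁻¹.injective h
      simp [this]
    · simp only [h, not_lt.2 h.le, true_and, false_and, and_false, if_false, add_zero, zero_add]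
  have hA : (univ.filter fun kl : Fin d × Fin d =>
        kl.1 < kl.2 ∧ σ⁻¹ kl.2 < σ⁻¹ kl.1 ∧ o kl.1 ∧ o kl.2).card
      = (univ.filter fun kl : Fin d × Fin d => kl.1 < kl.2 ∧
        σ⁻¹ kl.2 < σ⁻¹ kl.1 ∧ o kl.1 ∧ o kl.2 ∧ ord.lt (f kl.1) (f kl.2)).card
      + (univ.filter fun kl : Fin d × Fin d => kl.1 < kl.2 ∧
        σ⁻¹ kl.2 < σ⁻¹ kl.1 ∧ o kl.1 ∧ o kl.2 ∧ ord.lt (f kl.2) (f kl.1)).card := by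
    simp only [Finset.card_filter]
    rw [← Finset.sum_add_distrib]
    refine Finset.sum_congr rfl fun p _ => ?_
    by_cases hp : p.1 < p.2 ∧ σ⁻¹ p.2 < σ⁻¹ p.1 ∧ o p.1 ∧ o p.2
    · obtain ⟨h1, h2, h3, h4⟩ := hp
      have hne : f p.1 ≠ f p.2 := fun h => h1.ne (hinj _ _ h3 h4 h)
      rcases ord.le_total (f p.1) (f p.2) with h | h
      · have ha : ord.lt (f p.1) (f p.2) := lt_of_le_of_ne h hne
        have hb : ¬ ord.lt (f p.2) (f p.1) := not_lt.2 h
        simp [h1, h2, h3, h4, ha, hb]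
      · have ha : ord.lt (f p.2) (f p.1) := lt_of_le_of_ne h hne.symm
        have hb : ¬ ord.lt (f p.1) (f p.2) := not_lt.2 h
        simp [h1, h2, h3, h4, ha, hb]
    · rw [if_neg hp, if_neg (by tauto), if_neg (by tauto)]
  rw [hC, hC', hC2, hB, hA, Nat.even_iff]
  omega

lemma swap_parity {d : ℕ} (o : Fin d → Prop) {k l : Fin d} (hkl : k < l) (hk : o k) (hl : o l) :
    Odd (univ.filter fun p : Fin d × Fin d =>
        p.1 < p.2 ∧ (Equiv.swap k l)⁻¹ p.2 < (Equiv.swap k l)⁻¹ p.1 ∧ o p.1 ∧ o p.2).card := by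
  set M := univ.filter fun m : Fin d => k < m ∧ m < l ∧ o m with hM
  have : (univ.filter fun p : Fin d × Fin d =>
        p.1 < p.2 ∧ (Equiv.swap k l)⁻¹ p.2 < (Equiv.swap k l)⁻¹ p.1 ∧ o p.1 ∧ o p.2)
      = insert (k, l) ((M.image fun m => (k, m)) ∪ (M.image fun m => (m, l))) := by
    ext ⟨i, j⟩
    rw [Finset.mem_filter]
    simp only [hM, Equiv.swap_inv, Equiv.swap_apply_def, mem_filter, mem_univ, true_and,
      mem_insert, mem_union, mem_image, Prod.mk.injEq]
    constructor
    · rintro ⟨h1, h2, h3, h4⟩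
      by_cases hik : i = k
      · by_cases hjl : j = l
        · left; exact ⟨hik, hjl⟩
        · right; left
          refine ⟨j, ⟨?_, ?_, h4⟩, hik.symm, rfl⟩ <;> grind
      · right; right
        refine ⟨i, ⟨?_, ?_, h3⟩, rfl, ?_⟩ <;> grind
    · rintro (⟨rfl, rfl⟩ | ⟨m, ⟨h1, h2, h3⟩, rfl, rfl⟩ | ⟨m, ⟨h1, h2, h3⟩, rfl, rfl⟩) <;> grind
  rw [this, Finset.card_insert_of_notMem, Finset.card_union_of_disjoint,
    Finset.card_image_of_injective, Finset.card_image_of_injective]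
  · exact ⟨M.card, by ring⟩
  · intro a b h; simpa using h
  · intro a b h; simpa using h
  · rw [Finset.disjoint_left]
    rintro ⟨i, j⟩ h1 h2
    simp only [hM, mem_filter, mem_univ, true_and, mem_image, Prod.mk.injEq] at h1 h2
    grind
  · simp only [hM, mem_filter, mem_univ, true_and, mem_union, mem_image, Prod.mk.injEq]
    grind

/-! #### the elements xi -/

def xiW {P : GoodPair 𝕜 A β} (D : Tower 𝕜 A β n T P) (ord : LinearOrder (A × Fin n × Fin n))
    {d : ℕ} (w : Fin d → β × Fin n × Fin n) : T d :=
  xiB D ord (fun k => (w k).1) (fun k => (w k).2.1) (fun k => (w k).2.2)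

def angW (P : GoodPair 𝕜 A β) (ord : LinearOrder (A × Fin n × Fin n))
    {d : ℕ} (w : Fin d → β × Fin n × Fin n) : ℕ :=
  ang P.od ord (fun k => P.bas (w k).1) (fun k => (w k).2.1) (fun k => (w k).2.2)

def Tri (P : GoodPair 𝕜 A β) {d : ℕ} (w : Fin d → β × Fin n × Fin n) : Prop :=
  ∀ k l : Fin d, k ≠ l → w k = w l → P.part (w k).1 ≠ 2

def Nst {d : ℕ} (w : Fin d → β × Fin n × Fin n) : ℕ :=
  (univ.filter fun σ : Equiv.Perm (Fin d) => w ∘ σ = w).card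

lemma Nst_ne {d : ℕ} (w : Fin d → β × Fin n × Fin n) : Nst w ≠ 0 := by
  unfold Nst
  rw [Finset.card_ne_zero]
  exact ⟨1, by simp⟩

lemma Nst_comp {d : ℕ} (w : Fin d → β × Fin n × Fin n) (ρ : Equiv.Perm (Fin d)) :
    (univ.filter fun σ : Equiv.Perm (Fin d) => w ∘ σ = w ∘ ρ).card = Nst w := by
  unfold Nst
  refine Finset.card_bij' (fun σ _ => σ * ρ⁻¹) (fun σ _ => σ * ρ) ?_ ?_ ?_ ?_
  · intro σ h
    simp only [Finset.mem_filter, mem_univ, true_and] at h ⊢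
    funext k
    have := congrFun h (ρ⁻¹ k)
    simpa using this
  · intro σ h
    simp only [Finset.mem_filter, mem_univ, true_and] at h ⊢
    funext k
    have := congrFun h (ρ k)
    simpa using this
  · intro σ _; simp
  · intro σ _; simp

lemma xiW_eq [Nontrivial 𝕜] {P : GoodPair 𝕜 A β} (D : Tower 𝕜 A β n T P)
    (ord : LinearOrder (A × Fin n × Fin n)) {d : ℕ} (w : Fin d → β × Fin n × Fin n) :
    xiW D ord w = ∑ w' ∈ univ.image (fun σ : Equiv.Perm (Fin d) => w ∘ σ),
      ((-1 : ℤ) ^ (angW P ord w + angW P ord w')) • XW D w' := by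
  set ι : (Fin d → β × Fin n × Fin n) → (Fin d → A) × (Fin d → Fin n) × (Fin d → Fin n) :=
    fun w => (fun k => P.bas (w k).1, fun k => (w k).2.1, fun k => (w k).2.2) with hι
  have hinj : Function.Injective ι := by
    intro u v h
    simp only [hι, Prod.mk.injEq] at h
    funext k
    have h1 := P.bas.injective (congrFun h.1 k)
    have h2 := congrFun h.2.1 k
    have h3 := congrFun h.2.2 k
    exact Prod.ext h1 (Prod.ext h2 h3)
  have him : (univ.image fun σ : Equiv.Perm (Fin d) =>
      ((fun k => P.bas (w k).1) ∘ σ, (fun k => (w k).2.1) ∘ σ, (fun k => (w k).2.2) ∘ σ))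
      = (univ.image (fun σ : Equiv.Perm (Fin d) => w ∘ σ)).image ι := by
    rw [Finset.image_image]; rfl
  unfold xiW xiB xiH
  rw [him, Finset.sum_image (fun a _ b _ h => hinj h)]
  rfl

lemma sg_parity [Nontrivial 𝕜] (P : GoodPair 𝕜 A β) (ord : LinearOrder (A × Fin n × Fin n))
    {d : ℕ} (w : Fin d → β × Fin n × Fin n) (hw : Tri P w) (σ : Equiv.Perm (Fin d)) :
    ((-1 : ℤ)) ^ sg P σ w = (-1) ^ (angW P ord w + angW P ord (w ∘ σ)) := by
  have := parity_aux ord (fun k => P.bas (w k).1 ∈ P.od)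
    (fun k => (P.bas (w k).1, (w k).2.1, (w k).2.2)) σ (by
      intro k l hk hl h
      by_contra hne
      simp only [Prod.mk.injEq] at h
      have h1 := P.bas.injective h.1
      exact hw k l hne (Prod.ext h1 (Prod.ext h.2.1 h.2.2)) ((bas_od_iff P _).1 hk))
  have h2 : Even (sg P σ w + (angW P ord w + angW P ord (w ∘ σ))) := this
  rcases Nat.even_or_odd (sg P σ w) with h | h
  · rw [h.neg_one_pow, ((Nat.even_add.1 h2).1 h).neg_one_pow]
  · rw [h.neg_one_pow, Odd.neg_one_pow]
    by_contra h3
    rw [Nat.not_odd_iff_even] at h3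
    exact (Nat.not_even_iff_odd.2 h) ((Nat.even_add.1 h2).2 h3)

lemma symm_tri [Nontrivial 𝕜] {P : GoodPair 𝕜 A β} (D : Tower 𝕜 A β n T P)
    (ord : LinearOrder (A × Fin n × Fin n)) {d : ℕ} (w : Fin d → β × Fin n × Fin n)
    (hw : Tri P w) : symm D (XW D w) = Nst w • xiW D ord w := by
  rw [xiW_eq, Finset.smul_sum]
  unfold symm
  refine (Finset.sum_fiberwise_of_maps_to (s := univ)
    (t := univ.image (fun σ : Equiv.Perm (Fin d) => w ∘ σ))
    (g := fun σ : Equiv.Perm (Fin d) => w ∘ σ)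
    (fun σ _ => Finset.mem_image_of_mem _ (mem_univ _)) _).symm.trans ?_
  refine Finset.sum_congr rfl fun w' hw' => ?_
  obtain ⟨ρ, -, rfl⟩ := Finset.mem_image.1 hw'
  rw [← Nst_comp w ρ, ← Finset.sum_const]
  refine Finset.sum_congr rfl fun σ hσ => ?_
  have hσ' : w ∘ σ = w ∘ ρ := (Finset.mem_filter.1 hσ).2
  rw [act_XW, sg_parity P ord w hw, hσ']

lemma symm_not_tri [IsDomain 𝕜] [CharZero 𝕜] {P : GoodPair 𝕜 A β} (D : Tower 𝕜 A β n T P)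
    {d : ℕ} (w : Fin d → β × Fin n × Fin n)
    (hw : ¬ Tri P w) : symm D (XW D w) = 0 := by
  unfold Tri at hw
  push Not at hw
  obtain ⟨k, l, hne, hkl, hodd⟩ := hw
  wlog hlt : k < l generalizing k l
  · exact this l k hne.symm hkl.symm (hkl ▸ hodd) (lt_of_le_of_ne (not_lt.1 hlt) hne.symm)
  have h := symm_comp D (Equiv.swap k l) w
  have hc : w ∘ Equiv.swap k l = w := by
    funext m
    simp only [Function.comp, Equiv.swap_apply_def]
    split_ifs with h1 h2
    · rw [h1, hkl]
    · rw [h2, hkl]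
    · rfl
  have ho : Odd (sg P (Equiv.swap k l) w) :=
    swap_parity (fun k => P.bas (w k).1 ∈ P.od) hlt ((bas_od_iff P _).2 hodd)
      ((bas_od_iff P _).2 (hkl ▸ hodd))
  rw [hc, ho.neg_one_pow, neg_smul, one_smul] at h
  apply nsmul_cancel D (two_ne_zero)
  rw [two_smul, smul_zero]
  nth_rewrite 1 [h]
  simp

lemma Nst_perm {d : ℕ} (w : Fin d → β × Fin n × Fin n) (ρ : Equiv.Perm (Fin d)) :
    Nst (w ∘ ρ) = Nst w := by
  rw [← Nst_comp w ρ]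
  unfold Nst
  refine Finset.card_bij' (fun σ _ => ρ * σ) (fun σ _ => ρ⁻¹ * σ) ?_ ?_ ?_ ?_
  · intro σ h
    simp only [Finset.mem_filter, mem_univ, true_and] at h ⊢
    exact h
  · intro σ h
    simp only [Finset.mem_filter, mem_univ, true_and] at h ⊢
    funext k
    have := congrFun h k
    simpa using this
  · intro σ _; simp
  · intro σ _; simp

lemma Tri_perm {P : GoodPair 𝕜 A β} {d : ℕ} {w : Fin d → β × Fin n × Fin n} (hw : Tri P w)
    (ρ : Equiv.Perm (Fin d)) : Tri P (w ∘ ρ) :=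
  fun k l hkl h => hw (ρ k) (ρ l) (fun h' => hkl (ρ.injective h')) h

lemma xiW_perm [IsDomain 𝕜] [CharZero 𝕜] {P : GoodPair 𝕜 A β} (D : Tower 𝕜 A β n T P)
    (ord : LinearOrder (A × Fin n × Fin n)) {d : ℕ} (w : Fin d → β × Fin n × Fin n)
    (hw : Tri P w) (ρ : Equiv.Perm (Fin d)) :
    xiW D ord w = ((-1 : ℤ) ^ sg P ρ w) • xiW D ord (w ∘ ρ) := by
  apply nsmul_cancel D (Nst_ne w)
  rw [← symm_tri D ord w hw, smul_comm, ← Nst_perm w ρ, ← symm_tri D ord _ (Tri_perm hw ρ),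
    ← symm_comp]

lemma act_xiW [IsDomain 𝕜] [CharZero 𝕜] {P : GoodPair 𝕜 A β} (D : Tower 𝕜 A β n T P)
    (ord : LinearOrder (A × Fin n × Fin n)) {d : ℕ} (w : Fin d → β × Fin n × Fin n)
    (hw : Tri P w) (ρ : Equiv.Perm (Fin d)) :
    D.act ρ (xiW D ord w) = xiW D ord w := by
  apply nsmul_cancel D (Nst_ne w)
  rw [← map_nsmul, ← symm_tri D ord w hw, act_symm]

/-! #### multiplicities -/

def mul {d : ℕ} (w : Fin d → β × Fin n × Fin n) (x : β × Fin n × Fin n) : ℕ :=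
  (univ.filter fun k => w k = x).card

def facW (sel : β → Prop) {d : ℕ} (w : Fin d → β × Fin n × Fin n) : ℕ :=
  ∏ x ∈ (univ.image w).filter (fun x => sel x.1), Nat.factorial (mul w x)

lemma mem_sel (sel : β → Prop) (s : Finset (β × Fin n × Fin n)) (x : β × Fin n × Fin n) :
    x ∈ s.filter (fun x => sel x.1) ↔ x ∈ s ∧ sel x.1 := Finset.mem_filter

lemma facW_eq (sel : β → Prop) {d : ℕ} (w : Fin d → β × Fin n × Fin n) :
    facSel sel (fun k => (w k).1) (fun k => (w k).2.1) (fun k => (w k).2.2) = facW sel w := rfl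

lemma Nst_eq {d : ℕ} (w : Fin d → β × Fin n × Fin n) :
    Nst w = ∏ x ∈ univ.image w, Nat.factorial (mul w x) := by
  have := DomMulAct.stabilizer_card' w
  unfold Nst mul
  rw [← Fintype.card_subtype, this]
  refine Finset.prod_congr rfl fun x _ => ?_
  rw [Fintype.card_subtype]

lemma facW_perm (sel : β → Prop) {d : ℕ} (w : Fin d → β × Fin n × Fin n)
    (ρ : Equiv.Perm (Fin d)) : facW sel (w ∘ ρ) = facW sel w := by
  unfold facW
  have h1 : univ.image (w ∘ ρ) = univ.image w := by
    ext x
    simp only [mem_image, mem_univ, true_and, Function.comp]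
    exact ⟨fun ⟨k, hk⟩ => ⟨ρ k, hk⟩, fun ⟨k, hk⟩ => ⟨ρ⁻¹ k, by simpa using hk⟩⟩
  rw [h1]
  refine Finset.prod_congr rfl fun x _ => ?_
  congr 1
  unfold mul
  refine Finset.card_bij' (fun k _ => ρ k) (fun k _ => ρ⁻¹ k) ?_ ?_ ?_ ?_ <;> simp

lemma Nst_tri {P : GoodPair 𝕜 A β} {d : ℕ} {w : Fin d → β × Fin n × Fin n} (hw : Tri P w) :
    Nst w = facW (fun i => P.part i = 0) w * facW (fun i => P.part i = 1) w := by
  rw [Nst_eq, ← Finset.prod_filter_mul_prod_filter_not _ (fun x => P.part x.1 = 0)]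
  have h0 : ∏ x ∈ (univ.image w).filter (fun x => P.part x.1 = 0), Nat.factorial (mul w x)
      = facW (fun i => P.part i = 0) w := by
    unfold facW
    refine Finset.prod_congr ?_ (fun _ _ => rfl)
    ext x
    rw [Finset.mem_filter, mem_sel (fun i => P.part i = 0)]
  rw [h0]
  congr 1
  unfold facW
  refine (Finset.prod_subset ?_ ?_).symm
  · intro x hx
    rw [mem_sel (fun i => P.part i = 1)] at hx
    rw [Finset.mem_filter]
    refine ⟨hx.1, ?_⟩
    rw [hx.2]; decide
  · intro x hx hx'
    rw [mem_sel (fun i => P.part i = 1)] at hx'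
    rw [Finset.mem_filter] at hx
    have h2 : P.part x.1 = 2 := by
      have ha := hx.2
      have hb : ¬ P.part x.1 = 1 := fun h => hx' ⟨hx.1, h⟩
      revert ha hb
      generalize P.part x.1 = y
      fin_cases y <;> simp
    have : mul w x ≤ 1 := by
      unfold mul
      rw [Finset.card_le_one]
      intro k hk l hl
      rw [Finset.mem_filter] at hk hl
      by_contra hne
      exact hw k l hne (hk.2.trans hl.2.symm) (by rw [hk.2]; exact h2)
    exact Nat.factorial_eq_one.2 this

lemma facW_append {P : GoodPair 𝕜 A β} {e f : ℕ} (u : Fin e → β × Fin n × Fin n)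
    (v : Fin f → β × Fin n × Fin n) (hu : ∀ k, P.part (u k).1 = 0)
    (hv : ∀ k, P.part (v k).1 ≠ 0) :
    facW (fun i => P.part i = 0) (Fin.append u v) = Nst u := by
  rw [Nst_eq]
  unfold facW
  refine Eq.trans (b := ∏ x ∈ univ.image u, Nat.factorial (mul (Fin.append u v) x)) ?_ ?_
  · refine Finset.prod_congr ?_ (fun _ _ => rfl)
    ext x
    rw [mem_sel (fun i => P.part i = 0)]
    simp only [mem_image, mem_univ, true_and]
    constructor
    · rintro ⟨⟨k, rfl⟩, h⟩
      induction k using Fin.addCases with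
      | left k => exact ⟨k, by simp⟩
      | right k => simp only [Fin.append_right] at h; exact absurd h (hv k)
    · rintro ⟨k, rfl⟩
      exact ⟨⟨Fin.castAdd f k, by simp⟩, hu k⟩
  refine Finset.prod_congr rfl fun x hx => ?_
  congr 1
  unfold mul
  simp only [Finset.card_filter]
  rw [Fin.sum_univ_add]
  simp only [Fin.append_left, Fin.append_right]
  rw [Nat.add_eq_left]
  refine Finset.sum_eq_zero fun k _ => ?_
  rw [if_neg]
  rintro rfl
  obtain ⟨m, -, hm⟩ := Finset.mem_image.1 hx
  exact hv k (hm ▸ hu m)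

/-! #### the star product -/

def pp {e f : ℕ} (α : Equiv.Perm (Fin e)) (γ : Equiv.Perm (Fin f)) : Equiv.Perm (Fin (e + f)) :=
  finSumFinEquiv.permCongr (Equiv.sumCongr α γ)

lemma pp_left {e f : ℕ} (α : Equiv.Perm (Fin e)) (γ : Equiv.Perm (Fin f)) (k : Fin e) :
    pp α γ (Fin.castAdd f k) = Fin.castAdd f (α k) := by
  simp [pp, Equiv.permCongr_apply]

lemma pp_right {e f : ℕ} (α : Equiv.Perm (Fin e)) (γ : Equiv.Perm (Fin f)) (k : Fin f) :
    pp α γ (Fin.natAdd e k) = Fin.natAdd e (γ k) := by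
  simp [pp, Equiv.permCongr_apply]

lemma pp_inv {e f : ℕ} (α : Equiv.Perm (Fin e)) (γ : Equiv.Perm (Fin f)) :
    (pp α γ)⁻¹ = pp α⁻¹ γ⁻¹ := rfl

lemma append_pp {X : Type} {e f : ℕ} (α : Equiv.Perm (Fin e)) (γ : Equiv.Perm (Fin f))
    (u : Fin e → X) (v : Fin f → X) :
    Fin.append u v ∘ pp α γ = Fin.append (u ∘ α) (v ∘ γ) := by
  funext k
  induction k using Fin.addCases with
  | left k => simp [pp_left]
  | right k => simp [pp_right]

lemma sg_pp (P : GoodPair 𝕜 A β) {e f : ℕ} (α : Equiv.Perm (Fin e)) (γ : Equiv.Perm (Fin f))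
    (u : Fin e → β × Fin n × Fin n) (v : Fin f → β × Fin n × Fin n) :
    sg P (pp α γ) (Fin.append u v) = sg P α u + sg P γ v := by
  unfold sg sgnc
  rw [Finset.card_filter, Finset.card_filter, Finset.card_filter]
  simp only [Fintype.sum_prod_type, Fin.sum_univ_add, pp_inv, pp_left,
    pp_right, Fin.append_left, Fin.append_right]
  have h1 : ∀ (a : Fin e) (b : Fin f), Fin.castAdd f a < Fin.natAdd e b := by
    intro a b; rw [Fin.lt_def]; simp; omega
  have h2 : ∀ (a b : Fin e), Fin.castAdd f a < Fin.castAdd f b ↔ a < b := by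
    intro a b; rw [Fin.lt_def, Fin.lt_def]; simp
  have h3 : ∀ (a b : Fin f), Fin.natAdd e a < Fin.natAdd e b ↔ a < b := by
    intro a b; rw [Fin.lt_def, Fin.lt_def]; simp
  have h4 : ∀ (a : Fin e) (b : Fin f), ¬ Fin.natAdd e b < Fin.castAdd f a :=
    fun a b => not_lt.2 (h1 a b).le
  simp only [h2, h3, h4, false_and, and_false, if_false, Finset.sum_const_zero, add_zero, zero_add]

lemma XW_append {P : GoodPair 𝕜 A β} (D : Tower 𝕜 A β n T P) {e f : ℕ}
    (u : Fin e → β × Fin n × Fin n) (v : Fin f → β × Fin n × Fin n) :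
    D.X (Fin.append (fun k => P.bas (u k).1) (fun k => P.bas (v k).1))
      (Fin.append (fun k => (u k).2.1) (fun k => (v k).2.1))
      (Fin.append (fun k => (u k).2.2) (fun k => (v k).2.2)) = XW D (Fin.append u v) := by
  unfold XW
  congr 1
  all_goals
    funext k
    induction k using Fin.addCases <;> simp

lemma star_XW {P : GoodPair 𝕜 A β} (D : Tower 𝕜 A β n T P) {e f : ℕ}
    (u : Fin e → β × Fin n × Fin n) (v : Fin f → β × Fin n × Fin n) :
    D.star (XW D u) (XW D v)
      = ∑ σ ∈ univ.filter (IsShuffle e f), D.act σ (XW D (Fin.append u v)) := by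
  rw [← XW_append]
  exact D.star_X _ _ _ _ _ _

lemma star_act {P : GoodPair 𝕜 A β} (D : Tower 𝕜 A β n T P) {e f : ℕ}
    (u : Fin e → β × Fin n × Fin n) (v : Fin f → β × Fin n × Fin n)
    (α : Equiv.Perm (Fin e)) (γ : Equiv.Perm (Fin f)) :
    D.star (D.act α (XW D u)) (D.act γ (XW D v))
      = ∑ σ ∈ univ.filter (IsShuffle e f), D.act (pp α γ * σ) (XW D (Fin.append u v)) := by
  rw [act_XW, act_XW]
  simp only [map_zsmul, LinearMap.smul_apply]
  rw [star_XW, ← append_pp, smul_smul, mul_comm, ← pow_add, ← sg_pp, Finset.smul_sum]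
  refine Finset.sum_congr rfl fun σ _ => ?_
  rw [← map_zsmul, ← act_XW, D.act_act]

lemma shuffle_left {e f : ℕ} {σ : Equiv.Perm (Fin (e + f))} (h : IsShuffle e f σ) :
    Monotone (fun k : Fin e => σ⁻¹ (Fin.castAdd f k)) := by
  intro k l hkl
  rcases hkl.lt_or_eq with h1 | h1
  · exact (h.1 (Fin.castAdd f k) (Fin.castAdd f l) h1 l.isLt).le
  · rw [h1]

lemma shuffle_right {e f : ℕ} {σ : Equiv.Perm (Fin (e + f))} (h : IsShuffle e f σ) :
    Monotone (fun k : Fin f => σ⁻¹ (Fin.natAdd e k)) := by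
  intro k l hkl
  rcases hkl.lt_or_eq with h1 | h1
  · exact (h.2 (Fin.natAdd e k) (Fin.natAdd e l) (Nat.add_lt_add_left h1 e) (Nat.le_add_right _ _)).le
  · rw [h1]

lemma shuffle_of {e f : ℕ} {σ : Equiv.Perm (Fin (e + f))}
    (h1 : Monotone (fun k : Fin e => σ⁻¹ (Fin.castAdd f k)))
    (h2 : Monotone (fun k : Fin f => σ⁻¹ (Fin.natAdd e k))) : IsShuffle e f σ := by
  constructor
  · intro k l hkl hl
    refine lt_of_le_of_ne ?_ (fun h => hkl.ne (σ⁻¹.injective h))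
    have hkl' : (k : ℕ) < l := hkl
    exact h1 (show (⟨k, by omega⟩ : Fin e) ≤ ⟨l, hl⟩ from hkl'.le)
  · intro k l hkl hk
    refine lt_of_le_of_ne ?_ (fun h => hkl.ne (σ⁻¹.injective h))
    have hkl' : (k : ℕ) < l := hkl
    have h := h2 (show (⟨(k : ℕ) - e, by omega⟩ : Fin f) ≤ ⟨(l : ℕ) - e, by omega⟩ from
      Nat.sub_le_sub_right hkl'.le e)
    have ek : Fin.natAdd e (⟨(k : ℕ) - e, by omega⟩ : Fin f) = k := by
      ext; simp; omega
    have el : Fin.natAdd e (⟨(l : ℕ) - e, by omega⟩ : Fin f) = l := by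
      ext; simp; omega
    simp only [ek, el] at h
    exact h

lemma star_symm {P : GoodPair 𝕜 A β} (D : Tower 𝕜 A β n T P) {e f : ℕ}
    (u : Fin e → β × Fin n × Fin n) (v : Fin f → β × Fin n × Fin n) :
    D.star (symm D (XW D u)) (symm D (XW D v)) = symm D (XW D (Fin.append u v)) := by
  unfold symm
  simp only [map_sum, LinearMap.sum_apply, star_act]
  rw [Finset.sum_comm, ← Finset.sum_product', ← Finset.sum_product']
  refine Finset.sum_nbij (fun p => pp p.1.1 p.1.2 * p.2) (fun _ _ => mem_univ _) ?_ ?_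
    (fun _ _ => rfl)
  · rintro ⟨⟨α, γ⟩, σ⟩ h ⟨⟨α', γ'⟩, σ'⟩ h' heq
    simp only [coe_product, coe_univ, Set.mem_prod, Set.mem_univ, true_and, mem_coe,
      mem_univ, Finset.mem_filter] at h h'
    have heq : pp α γ * σ = pp α' γ' * σ' := heq
    set τ := pp α γ * σ with hτ
    have e1 : σ⁻¹ = τ⁻¹ * pp α γ := by rw [hτ]; group
    have e2 : σ'⁻¹ = τ⁻¹ * pp α' γ' := by rw [heq]; group
    have m1 := shuffle_left h
    have m1' := shuffle_left h'
    have m2 := shuffle_right h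
    have m2' := shuffle_right h'
    simp only [e1, e2, Equiv.Perm.mul_apply, pp_left, pp_right] at m1 m1' m2 m2'
    have ea : α = α' := by
      have := Tuple.unique_monotone (f := fun k : Fin e => τ⁻¹ (Fin.castAdd f k)) m1 m1'
      ext k
      have hk := τ⁻¹.injective (congrFun this k)
      simpa [Fin.ext_iff] using hk
    have eg : γ = γ' := by
      have := Tuple.unique_monotone (f := fun k : Fin f => τ⁻¹ (Fin.natAdd e k)) m2 m2'
      ext k
      have hk := τ⁻¹.injective (congrFun this k)
      simpa [Fin.ext_iff] using hk
    subst ea eg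
    have : σ = σ' := mul_left_cancel heq
    rw [this]
  · rintro τ -
    set α := Tuple.sort (fun k : Fin e => τ⁻¹ (Fin.castAdd f k)) with hα
    set γ := Tuple.sort (fun k : Fin f => τ⁻¹ (Fin.natAdd e k)) with hγ
    refine ⟨((α, γ), (pp α γ)⁻¹ * τ), ?_, ?_⟩
    · simp only [coe_product, coe_univ, Set.mem_prod, Set.mem_univ, true_and, mem_coe,
        mem_univ, Finset.mem_filter]
      apply shuffle_of
      · have := Tuple.monotone_sort (fun k : Fin e => τ⁻¹ (Fin.castAdd f k))
        simp only [mul_inv_rev, inv_inv, Equiv.Perm.mul_apply, pp_left]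
        exact this
      · have := Tuple.monotone_sort (fun k : Fin f => τ⁻¹ (Fin.natAdd e k))
        simp only [mul_inv_rev, inv_inv, Equiv.Perm.mul_apply, pp_right]
        exact this
    · show pp α γ * ((pp α γ)⁻¹ * τ) = τ
      group

/-! #### spanning sets -/

lemma starSub_span {P : GoodPair 𝕜 A β} (D : Tower 𝕜 A β n T P) {e f : ℕ}
    (S : Set (T e)) (S' : Set (T f)) :
    starSub D (Submodule.span 𝕜 S) (Submodule.span 𝕜 S')
      = Submodule.span 𝕜 (Set.image2 (fun x y => D.star x y) S S') := by
  rw [← Submodule.map₂_span_span, Submodule.map₂_eq_span_image2]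
  unfold starSub
  congr 1
  ext z
  constructor
  · rintro ⟨u, hu, v, hv, rfl⟩
    exact ⟨u, hu, v, hv, rfl⟩
  · rintro ⟨u, hu, v, hv, rfl⟩
    exact ⟨u, hu, v, hv, rfl⟩

lemma act_one_XW {P : GoodPair 𝕜 A β} (D : Tower 𝕜 A β n T P) {d : ℕ}
    (w : Fin d → β × Fin n × Fin n) : D.act 1 (XW D w) = XW D w := by
  have h : sg P (1 : Equiv.Perm (Fin d)) w = 0 := by
    unfold sg sgnc
    rw [Finset.card_eq_zero, Finset.filter_eq_empty_iff]
    rintro ⟨k, l⟩ - ⟨h1, h2, -⟩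
    simp only [inv_one, Equiv.Perm.one_apply] at h1 h2
    exact lt_asymm h1 h2
  rw [act_XW, h, pow_zero, one_smul]
  rfl

lemma symm_one {P : GoodPair 𝕜 A β} (D : Tower 𝕜 A β n T P) {d : ℕ} [Subsingleton (Fin d)]
    (w : Fin d → β × Fin n × Fin n) : symm D (XW D w) = XW D w := by
  unfold symm
  rw [Fintype.sum_eq_single 1, act_one_XW]
  intro σ hσ
  exact absurd (Subsingleton.elim σ 1) hσ

lemma starPow_eq {P : GoodPair 𝕜 A β} (D : Tower 𝕜 A β n T P) (e : ℕ) :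
    starPow D e = Submodule.span 𝕜 {x | ∃ v : Fin e → β × Fin n × Fin n,
      (∀ k, P.part (v k).1 ≠ 0) ∧ x = symm D (XW D v)} := by
  induction e with
  | zero =>
    show Submodule.span 𝕜 {D.X Fin.elim0 Fin.elim0 Fin.elim0} = _
    congr 1
    ext x
    constructor
    · rintro rfl
      refine ⟨Fin.elim0, fun k => k.elim0, ?_⟩
      rw [symm_one]
      unfold XW
      congr 1 <;> exact Subsingleton.elim _ _
    · rintro ⟨v, -, rfl⟩
      rw [symm_one]
      unfold XW
      show _ = _
      congr 1 <;> exact Subsingleton.elim _ _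
  | succ e ih =>
    show starSub D (starPow D e) (Ysub D) = _
    unfold Ysub
    rw [ih, starSub_span]
    congr 1
    ext z
    constructor
    · rintro ⟨_, ⟨v, hv, rfl⟩, _, ⟨i, r, s, hi, rfl⟩, rfl⟩
      refine ⟨Fin.append v (fun _ => (i, r, s)), ?_, ?_⟩
      · intro k
        induction k using Fin.addCases with
        | left k => rw [Fin.append_left]; exact hv k
        | right k => rw [Fin.append_right]; exact hi
      · rw [← star_symm, symm_one (d := 1)]
        rfl
    · rintro ⟨v, hv, rfl⟩
      refine ⟨_, ⟨v ∘ Fin.castAdd 1, fun k => hv _, rfl⟩, _,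
        ⟨(v (Fin.last e)).1, (v (Fin.last e)).2.1, (v (Fin.last e)).2.2, hv _, rfl⟩, ?_⟩
      have h1 : D.X (fun _ : Fin 1 => P.bas (v (Fin.last e)).1) (fun _ => (v (Fin.last e)).2.1)
          (fun _ => (v (Fin.last e)).2.2) = symm D (XW D (fun _ : Fin 1 => v (Fin.last e))) := by
        rw [symm_one]; rfl
      show D.star _ _ = _
      rw [h1, star_symm]
      congr 2
      funext k
      induction k using Fin.addCases with
      | left k => rw [Fin.append_left]; rfl
      | right k =>
        rw [Fin.append_right]
        have : k = 0 := Subsingleton.elim _ _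
        subst this
        rfl

lemma part0_tri {P : GoodPair 𝕜 A β} {d : ℕ} {u : Fin d → β × Fin n × Fin n}
    (hu : ∀ k, P.part (u k).1 = 0) : Tri P u := by
  intro k l _ _
  rw [hu k]
  decide

lemma part0_sg [Nontrivial 𝕜] {P : GoodPair 𝕜 A β} {d : ℕ} {u : Fin d → β × Fin n × Fin n}
    (hu : ∀ k, P.part (u k).1 = 0) (σ : Equiv.Perm (Fin d)) : sg P σ u = 0 := by
  unfold sg sgnc
  rw [Finset.card_eq_zero, Finset.filter_eq_empty_iff]
  rintro ⟨k, l⟩ - ⟨-, -, h, -⟩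
  have := (bas_od_iff P _).1 h
  rw [hu k] at this
  exact absurd this (by decide)

lemma part0_ang [Nontrivial 𝕜] {P : GoodPair 𝕜 A β} (ord : LinearOrder (A × Fin n × Fin n))
    {d : ℕ} {u : Fin d → β × Fin n × Fin n}
    (hu : ∀ k, P.part (u k).1 = 0) : angW P ord u = 0 := by
  unfold angW ang
  rw [Finset.card_eq_zero, Finset.filter_eq_empty_iff]
  rintro ⟨k, l⟩ - ⟨-, h, -⟩
  have := (bas_od_iff P _).1 h
  rw [hu k] at this
  exact absurd this (by decide)

lemma aa_le (P : GoodPair 𝕜 A β) :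
    P.aa ≤ Submodule.span 𝕜 (P.bas '' {i | P.part i = 0}) := by
  intro x hx
  have htop : x ∈ Submodule.span 𝕜 (P.bas '' {i | P.part i = 0}) ⊔
      (Submodule.span 𝕜 (P.bas '' {i | P.part i = 1}) ⊔
        Submodule.span 𝕜 (P.bas '' {i | P.part i = 2})) := by
    rw [← Submodule.span_union, ← Submodule.span_union, ← Set.image_union, ← Set.image_union]
    have : ({i | P.part i = 0} ∪ ({i | P.part i = 1} ∪ {i | P.part i = 2}) : Set β)
        = Set.univ := by
      ext i
      simp only [Set.mem_union, Set.mem_univ, iff_true]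
      show P.part i = 0 ∨ P.part i = 1 ∨ P.part i = 2
      generalize P.part i = y
      fin_cases y <;> simp
    rw [this, Set.image_univ, P.bas.span_eq]
    trivial
  obtain ⟨x0, h0, y, hy, rfl⟩ := Submodule.mem_sup.1 htop
  obtain ⟨x1, h1, x2, h2, rfl⟩ := Submodule.mem_sup.1 hy
  have k0 : x0 ∈ P.aa := by
    refine (Submodule.span_le.2 ?_) h0
    rintro _ ⟨i, hi, rfl⟩; exact P.bas_mem_aa i hi
  have k1 : x1 ∈ P.cc := by
    refine (Submodule.span_le.2 ?_) h1
    rintro _ ⟨i, hi, rfl⟩; exact P.bas_mem_cc i hi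
  have k2 : x2 ∈ P.od := by
    refine (Submodule.span_le.2 ?_) h2
    rintro _ ⟨i, hi, rfl⟩; exact P.bas_mem_od i hi
  have k12 : x1 + x2 ∈ P.aa := by
    have := P.aa.sub_mem hx k0
    simpa using this
  have z2 : x2 = 0 := by
    refine (Submodule.disjoint_def.1 P.compl.disjoint) _ ?_ k2
    have := P.ev.sub_mem (P.aa_le_ev k12) (cc_le_ev P k1)
    simpa using this
  subst z2
  have z1 : x1 = 0 := by
    rw [add_zero] at k12
    have : x1 ∈ P.aa ⊓ P.cc := ⟨k12, k1⟩
    rwa [P.aa_inf_cc, Submodule.mem_bot] at this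
  subst z1
  simpa using h0

lemma X_mem {P : GoodPair 𝕜 A β} (D : Tower 𝕜 A β n T P) {d : ℕ} (r s : Fin d → Fin n)
    (S : Submodule 𝕜 (T d)) (B : Set A)
    (hB : ∀ a : Fin d → A, (∀ k, a k ∈ B) → D.X a r s ∈ S) (t : Finset (Fin d)) :
    ∀ a : Fin d → A, (∀ k ∈ t, a k ∈ Submodule.span 𝕜 B) → (∀ k, k ∉ t → a k ∈ B) →
      D.X a r s ∈ S := by
  induction t using Finset.induction_on with
  | empty => intro a _ h; exact hB a (fun k => h k (by simp))
  | insert k t hk ih =>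
    intro a h1 h2
    let g : A →ₗ[𝕜] T d :=
      { toFun := fun x => D.X (Function.update a k x) r s
        map_add' := D.X_update_add a r s k
        map_smul' := D.X_update_smul a r s k }
    have hle : Submodule.span 𝕜 B ≤ S.comap g := by
      rw [Submodule.span_le]
      intro x hx
      show D.X (Function.update a k x) r s ∈ S
      apply ih
      · intro l hl
        have : l ≠ k := fun h => hk (h ▸ hl)
        rw [Function.update_of_ne this]
        exact h1 l (Finset.mem_insert_of_mem hl)
      · intro l hl
        by_cases hlk : l = k
        · subst hlk; simpa using hx
        · rw [Function.update_of_ne hlk]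
          exact h2 l (by simp [hlk, hl])
    have := hle (h1 k (Finset.mem_insert_self _ _))
    have h3 : D.X (Function.update a k (a k)) r s ∈ S := this
    rwa [Function.update_eq_self] at h3

lemma SchurA_span_le {P : GoodPair 𝕜 A β} (D : Tower 𝕜 A β n T P) (d : ℕ) :
    Submodule.span 𝕜 {x | ∃ a r s, (∀ k, a k ∈ P.aa) ∧ x = D.X (e := d) a r s}
      ≤ Submodule.span 𝕜 (basW D d '' {w | ∀ k, P.part (w k).1 = 0}) := by
  rw [Submodule.span_le]
  rintro _ ⟨a, r, s, ha, rfl⟩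
  refine X_mem D r s _ (P.bas '' {i | P.part i = 0}) ?_ univ a
    (fun k _ => aa_le P (ha k)) (fun k hk => absurd (mem_univ k) hk)
  intro a ha
  choose b hb hb' using ha
  apply Submodule.subset_span
  refine ⟨fun k => (b k, r k, s k), hb, ?_⟩
  rw [basW_apply]
  unfold XW
  simp only [hb']

lemma SchurA_eq [IsDomain 𝕜] [CharZero 𝕜] {P : GoodPair 𝕜 A β} (D : Tower 𝕜 A β n T P)
    (ord : LinearOrder (A × Fin n × Fin n)) (d : ℕ) :
    SchurA D d = Submodule.span 𝕜 {x | ∃ u : Fin d → β × Fin n × Fin n,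
      (∀ k, P.part (u k).1 = 0) ∧ x = xiW D ord u} := by
  apply le_antisymm
  · rintro x ⟨hx1, hx2⟩
    have hx1 := SchurA_span_le D d hx1
    set c := (basW D d).repr x with hc
    have hsupp : ∀ w ∈ c.support, ∀ k, P.part (w k).1 = 0 :=
      fun w hw => (Module.Basis.mem_span_image (basW D d)).1 hx1 hw
    have hxs : x = ∑ w ∈ c.support, c w • XW D w := by
      conv_lhs => rw [← (basW D d).linearCombination_repr x]
      rw [Finsupp.linearCombination_apply, Finsupp.sum]
      simp only [basW_apply]
      rfl
    have hinv : ∀ (w0 : Fin d → β × Fin n × Fin n) (σ : Equiv.Perm (Fin d)),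
        c (w0 ∘ σ) = c w0 := by
      intro w0 σ
      have h1 : x = ∑ w ∈ c.support, c w • XW D (w ∘ σ) := by
        conv_lhs => rw [← hx2 σ, hxs]
        rw [map_sum]
        refine Finset.sum_congr rfl fun w hw => ?_
        rw [map_smul, act_XW, part0_sg (hsupp w hw), pow_zero, one_smul]
      have h2 : c (w0 ∘ σ) = ∑ w ∈ c.support, c w * (if w = w0 then 1 else 0) := by
        conv_lhs => rw [hc, h1]
        rw [map_sum, Finsupp.finset_sum_apply]
        refine Finset.sum_congr rfl fun w hw => ?_
        rw [map_smul, ← basW_apply, Module.Basis.repr_self, Finsupp.smul_apply,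
          Finsupp.single_apply, smul_eq_mul]
        congr 1
        have : (w ∘ σ = w0 ∘ σ) ↔ w = w0 :=
          ⟨fun h => σ.surjective.injective_comp_right h, fun h => by rw [h]⟩
        simp only [this]
      rw [h2]
      simp only [mul_ite, mul_one, mul_zero, Finset.sum_ite_eq']
      split_ifs with h
      · rfl
      · exact (Finsupp.notMem_support_iff.1 h).symm
    set orb : (Fin d → β × Fin n × Fin n) → Finset (Fin d → β × Fin n × Fin n) :=
      fun w => univ.image (fun σ : Equiv.Perm (Fin d) => w ∘ σ) with horb
    have horb_self : ∀ w, w ∈ orb w := fun w =>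
      Finset.mem_image.2 ⟨1, mem_univ _, rfl⟩
    have horb_eq : ∀ w (σ : Equiv.Perm (Fin d)), orb (w ∘ σ) = orb w := by
      intro w σ
      ext w'
      simp only [horb, Finset.mem_image, mem_univ, true_and]
      constructor
      · rintro ⟨τ, rfl⟩; exact ⟨σ * τ, rfl⟩
      · rintro ⟨τ, rfl⟩
        refine ⟨σ⁻¹ * τ, ?_⟩
        funext k
        simp
    rw [hxs, ← Finset.sum_fiberwise_of_maps_to (t := c.support.image orb) (g := orb)
      (fun w hw => Finset.mem_image_of_mem _ hw)]
    refine Submodule.sum_mem _ fun O hO => ?_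
    obtain ⟨w0, hw0, rfl⟩ := Finset.mem_image.1 hO
    have hfil : c.support.filter (fun w => orb w = orb w0) = orb w0 := by
      ext w
      rw [Finset.mem_filter]
      constructor
      · rintro ⟨-, h⟩
        rw [← h]; exact horb_self w
      · intro h
        obtain ⟨σ, -, rfl⟩ := Finset.mem_image.1 h
        refine ⟨?_, horb_eq _ _⟩
        rw [Finsupp.mem_support_iff, hinv]
        exact Finsupp.mem_support_iff.1 hw0
    have hsum : ∑ w ∈ c.support.filter (fun w => orb w = orb w0), c w • XW D w
        = c w0 • xiW D ord w0 := by
      rw [hfil, xiW_eq, Finset.smul_sum]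
      refine Finset.sum_congr rfl fun w hw => ?_
      obtain ⟨σ, -, rfl⟩ := Finset.mem_image.1 hw
      rw [hinv, part0_ang ord (hsupp w0 hw0),
        part0_ang ord (u := w0 ∘ σ) (fun k => hsupp w0 hw0 (σ k)), pow_zero, one_smul]
    rw [hsum]
    exact Submodule.smul_mem _ _ (Submodule.subset_span ⟨w0, hsupp w0 hw0, rfl⟩)
  · rw [Submodule.span_le]
    rintro _ ⟨u, hu, rfl⟩
    refine ⟨?_, fun σ => act_xiW D ord u (part0_tri hu) σ⟩
    rw [xiW_eq]
    refine Submodule.sum_mem _ fun w hw => ?_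
    obtain ⟨σ, -, rfl⟩ := Finset.mem_image.1 hw
    refine zsmul_mem (Submodule.subset_span ?_) _
    exact ⟨_, _, _, fun k => P.bas_mem_aa _ (hu (σ k)), rfl⟩

lemma star_xi_symm [IsDomain 𝕜] [CharZero 𝕜] {P : GoodPair 𝕜 A β} (D : Tower 𝕜 A β n T P)
    (ord : LinearOrder (A × Fin n × Fin n)) {e f : ℕ}
    (u : Fin e → β × Fin n × Fin n) (v : Fin f → β × Fin n × Fin n)
    (hu : ∀ k, P.part (u k).1 = 0) (hv : ∀ k, P.part (v k).1 ≠ 0)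
    (hw : Tri P (Fin.append u v)) :
    D.star (xiW D ord u) (symm D (XW D v))
      = facW (fun i => P.part i = 1) (Fin.append u v) • xiW D ord (Fin.append u v) := by
  apply nsmul_cancel D (Nst_ne u)
  rw [← LinearMap.smul_apply, ← map_nsmul, ← symm_tri D ord u (part0_tri hu), star_symm,
    symm_tri D ord _ hw, Nst_tri hw, facW_append u v hu hv, mul_smul]

lemma star_xi_symm' [IsDomain 𝕜] [CharZero 𝕜] {P : GoodPair 𝕜 A β} (D : Tower 𝕜 A β n T P)
    (ord : LinearOrder (A × Fin n × Fin n)) {e f : ℕ}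
    (u : Fin e → β × Fin n × Fin n) (v : Fin f → β × Fin n × Fin n)
    (hu : ∀ k, P.part (u k).1 = 0)
    (hw : ¬ Tri P (Fin.append u v)) :
    D.star (xiW D ord u) (symm D (XW D v)) = 0 := by
  apply nsmul_cancel D (Nst_ne u)
  rw [← LinearMap.smul_apply, ← map_nsmul, ← symm_tri D ord u (part0_tri hu), star_symm,
    symm_not_tri D _ hw, smul_zero]

def cnt (P : GoodPair 𝕜 A β) {d : ℕ} (w : Fin d → β × Fin n × Fin n) : ℕ :=
  (univ.filter fun k => P.part (w k).1 ≠ 0).card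

lemma cnt_perm (P : GoodPair 𝕜 A β) {d : ℕ} (w : Fin d → β × Fin n × Fin n)
    (ρ : Equiv.Perm (Fin d)) : cnt P (w ∘ ρ) = cnt P w := by
  unfold cnt
  refine Finset.card_bij' (fun k _ => ρ k) (fun k _ => ρ⁻¹ k) ?_ ?_ ?_ ?_ <;> simp

lemma cnt_append (P : GoodPair 𝕜 A β) {e f : ℕ}
    (u : Fin e → β × Fin n × Fin n) (v : Fin f → β × Fin n × Fin n)
    (hu : ∀ k, P.part (u k).1 = 0) (hv : ∀ k, P.part (v k).1 ≠ 0) :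
    cnt P (Fin.append u v) = f := by
  unfold cnt
  rw [Finset.card_filter, Fin.sum_univ_add]
  simp [hu, hv]

lemma xiW_mem [Nontrivial 𝕜] {P : GoodPair 𝕜 A β} (D : Tower 𝕜 A β n T P)
    (ord : LinearOrder (A × Fin n × Fin n)) {d : ℕ} (w : Fin d → β × Fin n × Fin n) :
    xiW D ord w ∈ Submodule.span 𝕜 (basW D d '' {w' | cnt P w' = cnt P w}) := by
  rw [xiW_eq]
  refine Submodule.sum_mem _ fun w' hw => ?_
  obtain ⟨σ, -, rfl⟩ := Finset.mem_image.1 hw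
  refine zsmul_mem (Submodule.subset_span ?_) _
  exact ⟨_, cnt_perm P w σ, basW_apply D d _⟩

lemma piece_le [IsDomain 𝕜] [CharZero 𝕜] {P : GoodPair 𝕜 A β} (D : Tower 𝕜 A β n T P)
    (ord : LinearOrder (A × Fin n × Fin n)) {m e d : ℕ} (h : m + e = d) :
    Submodule.map (tcast (𝕜 := 𝕜) (T := T) h).toLinearMap (starSub D (SchurA D m) (starPow D e))
      ≤ SchurT D ord d ⊓ Submodule.span 𝕜 (basW D d '' {w | cnt P w = e}) := by
  subst h
  rw [Submodule.map_le_iff_le_comap, SchurA_eq D ord, starPow_eq, starSub_span,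
    Submodule.span_le]
  rintro _ ⟨_, ⟨u, hu, rfl⟩, _, ⟨v, hv, rfl⟩, rfl⟩
  show D.star (xiW D ord u) (symm D (XW D v)) ∈
    SchurT D ord (m + e) ⊓ Submodule.span 𝕜 (basW D (m + e) '' {w | cnt P w = e})
  by_cases hw : Tri P (Fin.append u v)
  · rw [star_xi_symm D ord u v hu hv hw]
    constructor
    · refine Submodule.subset_span ⟨fun k => (Fin.append u v k).1, fun k => (Fin.append u v k).2.1,
        fun k => (Fin.append u v k).2.2, hw, rfl⟩
    · have := xiW_mem D ord (Fin.append u v)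
      rw [cnt_append P u v hu hv] at this
      exact nsmul_mem this _
  · rw [star_xi_symm' D ord u v hu hw]
    exact Submodule.zero_mem _

lemma split_exists {d : ℕ} (p : Fin d → Prop) : ∃ (m e : ℕ) (h : m + e = d)
    (ρ : Fin (m + e) ≃ Fin d), (∀ k, p (ρ (Fin.castAdd e k))) ∧
      ∀ k, ¬ p (ρ (Fin.natAdd m k)) := by
  let e1 := Fintype.equivFin {k // p k}
  let e2 := Fintype.equivFin {k // ¬ p k}
  let ρ := finSumFinEquiv.symm.trans ((Equiv.sumCongr e1.symm e2.symm).trans (Equiv.sumCompl p))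
  refine ⟨_, _, ?_, ρ, ?_, ?_⟩
  · simpa using Fintype.card_congr ρ
  · intro k
    simp only [ρ, Equiv.trans_apply, finSumFinEquiv_symm_apply_castAdd, Equiv.sumCongr_apply,
      Sum.map_inl, Equiv.sumCompl_apply_inl]
    exact (e1.symm k).2
  · intro k
    simp only [ρ, Equiv.trans_apply, finSumFinEquiv_symm_apply_natAdd, Equiv.sumCongr_apply,
      Sum.map_inr, Equiv.sumCompl_apply_inr]
    exact (e2.symm k).2

lemma eta_mem [IsDomain 𝕜] [CharZero 𝕜] {P : GoodPair 𝕜 A β} (D : Tower 𝕜 A β n T P)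
    (ord : LinearOrder (A × Fin n × Fin n)) {d : ℕ} (w : Fin d → β × Fin n × Fin n)
    (hw : Tri P w) : ∃ (m e : ℕ) (h : m + e = d),
      facW (fun i => P.part i = 1) w • xiW D ord w ∈
        Submodule.map (tcast (𝕜 := 𝕜) (T := T) h).toLinearMap
          (starSub D (SchurA D m) (starPow D e)) := by
  obtain ⟨m, e, h, ρ, h0, h1⟩ := split_exists (fun k => P.part (w k).1 = 0)
  refine ⟨m, e, h, ?_⟩
  subst h
  set u := w ∘ ρ ∘ Fin.castAdd e with hu
  set v := w ∘ ρ ∘ Fin.natAdd m with hv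
  have happ : w ∘ ρ = Fin.append u v := by
    funext k
    induction k using Fin.addCases with
    | left k => rw [Fin.append_left]; rfl
    | right k => rw [Fin.append_right]; rfl
  have htri : Tri P (Fin.append u v) := happ ▸ Tri_perm hw ρ
  rw [xiW_perm D ord w hw ρ, ← facW_perm _ w ρ, happ, smul_comm,
    ← star_xi_symm D ord u v h0 h1 htri]
  refine zsmul_mem ?_ _
  refine ⟨D.star (xiW D ord u) (symm D (XW D v)), ?_, rfl⟩
  refine Submodule.subset_span ⟨_, ?_, _, ?_, rfl⟩
  · rw [SchurA_eq D ord]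
    exact Submodule.subset_span ⟨u, h0, rfl⟩
  · rw [starPow_eq]
    exact Submodule.subset_span ⟨v, h1, rfl⟩

/-- `T^A_𝔞(n,d) = ⊕_{e=0}^d S^𝔞(n,d−e) * Star^e Y`:  the family of
submodules `S^𝔞(n,d−e) * Star^e Y`, `0 ≤ e ≤ d`, of `M_n(A)^{⊗d}` is independent and its
supremum is `T^A_𝔞(n,d)`. -/
theorem statement9 {𝕜 A β : Type} [CommRing 𝕜] [IsDomain 𝕜] [CharZero 𝕜]
    [NonUnitalRing A] [Module 𝕜 A] [SMulCommClass 𝕜 A A] [IsScalarTower 𝕜 A A]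
    {n : ℕ} (hn : 0 < n) {T : ℕ → Type} [∀ e, NonUnitalRing (T e)] [∀ e, Module 𝕜 (T e)]
    (P : GoodPair 𝕜 A β) (D : Tower 𝕜 A β n T P) (ord : LinearOrder (A × Fin n × Fin n))
    (d : ℕ) :
    iSupIndep (fun e : Fin (d + 1) =>
      Submodule.map
        (tcast (𝕜 := 𝕜) (show (d - (e : ℕ)) + (e : ℕ) = d by have := e.isLt; omega)).toLinearMap
        (starSub D (SchurA D (d - (e : ℕ))) (starPow D (e : ℕ)))) ∧
    (⨆ e : Fin (d + 1),
      Submodule.map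
        (tcast (𝕜 := 𝕜) (show (d - (e : ℕ)) + (e : ℕ) = d by have := e.isLt; omega)).toLinearMap
        (starSub D (SchurA D (d - (e : ℕ))) (starPow D (e : ℕ))))
      = SchurT D ord d := by
  have := hn
  constructor
  · rw [iSupIndep_def]
    intro i
    have hdisj : Disjoint (Submodule.span 𝕜 (basW D d '' {w | cnt P w = (i : ℕ)}))
        (Submodule.span 𝕜 (basW D d '' {w | cnt P w ≠ (i : ℕ)})) := by
      apply (basW D d).linearIndependent.disjoint_span_image
      rw [Set.disjoint_left]
      intro w h1 h2
      exact h2 h1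
    refine hdisj.mono ((piece_le D ord _).trans inf_le_right) ?_
    refine iSup_le fun j => iSup_le fun hj => ?_
    refine ((piece_le D ord _).trans inf_le_right).trans (Submodule.span_mono ?_)
    refine Set.image_mono ?_
    intro w hw
    have hw : cnt P w = (j : ℕ) := hw
    show cnt P w ≠ (i : ℕ)
    rw [hw]
    exact fun h => hj (Fin.ext h)
  · apply le_antisymm
    · exact iSup_le fun e => (piece_le D ord _).trans inf_le_left
    · unfold SchurT
      rw [Submodule.span_le]
      rintro _ ⟨b, r, s, hb, rfl⟩
      obtain ⟨m, e, h, hmem⟩ := eta_mem D ord (fun k => (b k, r k, s k)) hb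
      obtain rfl : m = d - e := by omega
      exact Submodule.mem_iSup_of_mem (⟨e, by omega⟩ : Fin (d + 1)) hmem
end GS
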